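/- Let G be a graph on n vertices and let G′ be the join of G with the complete graph K_n, i.e., G′ is obtained from the disjoint union of a copy of G and a clique on n new vertices by adding all edges between the two parts (so every clique vertex is universal in G′). Then the minimum number of slots κ(G′) over all growth schedules for G′ with edge-activation distance d = 2 and zero excess edges equals χ(G) + n − 1, where χ(G) is the chromatic number of G. -/

import Mathlib

/-!
Vertices generated in the same slot are never adjacent, neither then nor later, so the birth slot is
a proper colouring of the target graph. For the join `G'` of `G` with `K_n`, in a colouring with
`k + 1` colours (slots `0, …, k`) the clique uses `n` distinct colours, none of which occurs on `G`;
hence `G` is `(k + 1 - n)`-colourable, which is the lower bound.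

Conversely, generate the clique vertices one per slot in slots `0, …, n - 1`, and then the colour
classes of an optimal colouring of `G`, one per slot. A clique vertex is universal, so as a parent it
permits edges to all vertices present; and since there are `n = |V|` clique vertices, the vertices
of `G` can be given pairwise distinct clique vertices as parents. No edge is ever deleted.
-/

open SimpleGraph

/-- A growth schedule of `k` slots for target graph `G`, with edge-activation
distance `d`.  `born v` is the slot in which `v` is generated (the initiator has
`born = 0`), `parent v` is the vertex for which `v` was generated, `graph t` is
the graph grown at the end of slot `t` (after edge deletions) and `mid t` is the
intermediate graph of slot `t` after vertex generations and edge activations but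
before edge deletions. -/
structure GrowthSchedule {V : Type*} [Fintype V] [DecidableEq V]
    (G : SimpleGraph V) (d : ℕ) (k : ℕ) where
  born : V → ℕ
  parent : V → V
  graph : ℕ → SimpleGraph V
  mid : ℕ → SimpleGraph V
  born_le : ∀ v, born v ≤ k
  init_unique : ∃! v, born v = 0
  parent_born : ∀ v, born v ≠ 0 → born (parent v) < born v
  parent_inj : ∀ v w, born v ≠ 0 → born v = born w → parent v = parent w → v = w
  graph_zero : graph 0 = ⊥
  graph_final : graph k = G
  keep_le_mid : ∀ t, graph t ≤ mid (t + 1)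
  parent_edge : ∀ v, born v ≠ 0 → (mid (born v)).Adj v (parent v)
  new_edges : ∀ t v w, (mid (t + 1)).Adj v w → ¬ (graph t).Adj v w →
    (born v = t + 1 ∧ born w ≤ t ∧
      (w = parent v ∨ ((graph t).Reachable (parent v) w ∧
        (graph t).dist (parent v) w ≤ d - 1))) ∨
    (born w = t + 1 ∧ born v ≤ t ∧
      (v = parent w ∨ ((graph t).Reachable (parent w) v ∧
        (graph t).dist (parent w) v ≤ d - 1)))
  graph_le_mid : ∀ t, graph (t + 1) ≤ mid (t + 1)
  connected : ∀ t v w, born v ≤ t → born w ≤ t → (graph t).Reachable v w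

/-- The total number of excess (i.e. deleted) edges of a growth schedule. -/
noncomputable def GrowthSchedule.excess {V : Type*} [Fintype V] [DecidableEq V]
    {G : SimpleGraph V} {d k : ℕ} (S : GrowthSchedule G d k) : ℕ :=
  ∑ t ∈ Finset.range k, ((S.mid (t + 1)).edgeSet \ (S.graph (t + 1)).edgeSet).ncard

/-- The star graph on `n` vertices: vertex `0` is the center, adjacent to all others. -/
def starGraph (n : ℕ) : SimpleGraph (Fin n) :=
  SimpleGraph.fromRel (fun u _ => u.val = 0)

/-- The join of `G` with a clique on `n` new vertices: all edges of `G`, all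
edges inside the clique, and all edges between the two parts. -/
def joinClique {V : Type*} (G : SimpleGraph V) (n : ℕ) : SimpleGraph (V ⊕ Fin n) :=
  SimpleGraph.fromRel (fun a b =>
    match a, b with
    | Sum.inl u, Sum.inl v => G.Adj u v
    | _, _ => True)

lemma joinClique_adj_inl {V : Type*} (G : SimpleGraph V) (n : ℕ) (u v : V) :
    (joinClique G n).Adj (Sum.inl u) (Sum.inl v) ↔ G.Adj u v := by
  simp only [joinClique, SimpleGraph.fromRel_adj]
  constructor
  · rintro ⟨-, h | h⟩
    · exact h
    · exact h.symm
  · intro h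
    exact ⟨by simpa using h.ne, Or.inl h⟩

lemma joinClique_adj_inr {V : Type*} (G : SimpleGraph V) (n : ℕ) (i : Fin n) (x : V ⊕ Fin n) :
    (joinClique G n).Adj (Sum.inr i) x ↔ x ≠ Sum.inr i := by
  simp only [joinClique, SimpleGraph.fromRel_adj]
  constructor
  · rintro ⟨h, -⟩
    exact h.symm
  · intro h
    exact ⟨h.symm, Or.inl trivial⟩

/-- The edge appeared in some slot, in which exactly one endpoint was new. -/
lemma GrowthSchedule.born_ne_of_adj {V : Type*} [Fintype V] [DecidableEq V]
    {G : SimpleGraph V} {d k : ℕ} (S : GrowthSchedule G d k) (t : ℕ) {v w : V}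
    (h : (S.graph t).Adj v w) : S.born v ≠ S.born w := by
  induction t with
  | zero => simp [S.graph_zero] at h
  | succ t ih =>
    by_cases h' : (S.graph t).Adj v w
    · exact ih h'
    · rcases S.new_edges t v w (S.graph_le_mid t h) h' with ⟨h1, h2, -⟩ | ⟨h1, h2, -⟩ <;> omega

/-- The clique takes up `n` of the `m` colours, and none of them can be used on `G`. -/
lemma colorable_of_joinClique {V : Type*} (G : SimpleGraph V) (n m : ℕ)
    (f : (joinClique G n).Coloring (Fin m)) : n ≤ m ∧ G.Colorable (m - n) := by
  classical
  have hinj : Function.Injective (fun i : Fin n => f (Sum.inr i)) := by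
    intro i j hij
    by_contra hne
    exact f.valid ((joinClique_adj_inr G n i (Sum.inr j)).2 (by simpa using Ne.symm hne)) hij
  let I : Finset (Fin m) := Finset.univ.image (fun i : Fin n => f (Sum.inr i))
  have hI : I.card = n := by
    simp [I, Finset.card_image_of_injective _ hinj]
  have hmem : ∀ v : V, f (Sum.inl v) ∈ Iᶜ := by
    intro v
    simp only [I, Finset.mem_compl, Finset.mem_image, Finset.mem_univ, true_and, not_exists]
    intro i
    exact f.valid ((joinClique_adj_inr G n i (Sum.inl v)).2 (by simp))
  refine ⟨by simpa using Fintype.card_le_of_injective _ hinj, ?_⟩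
  let g : G.Coloring (Iᶜ : Finset (Fin m)) :=
    SimpleGraph.Coloring.mk (fun v => ⟨f (Sum.inl v), hmem v⟩) (by
      intro u v huv h
      exact f.valid ((joinClique_adj_inl G n u v).2 huv) (congrArg Subtype.val h))
  have := g.colorable
  rwa [Fintype.card_coe, Finset.card_compl, hI, Fintype.card_fin] at this

/-- The subgraph of `G` (on the same vertex type) spanned by the vertices born by slot `t`. -/
def bornGraph {V : Type*} (G : SimpleGraph V) (born : V → ℕ) (t : ℕ) : SimpleGraph V where
  Adj v w := G.Adj v w ∧ born v ≤ t ∧ born w ≤ t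
  symm := ⟨fun _ _ h => ⟨h.1.symm, h.2.2, h.2.1⟩⟩
  loopless := ⟨fun _ h => h.1.ne rfl⟩

lemma bornGraph_mono {V : Type*} (G : SimpleGraph V) (born : V → ℕ) {s t : ℕ} (h : s ≤ t) :
    bornGraph G born s ≤ bornGraph G born t :=
  fun _ _ ha => ⟨ha.1, ha.2.1.trans h, ha.2.2.trans h⟩

/-- If the birth slots form a proper colouring and every parent is adjacent to all other vertices,
then never deleting an edge gives a valid schedule with zero excess. -/
lemma exists_schedule_of_universal_parents {V : Type*} [Fintype V] [DecidableEq V]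
    (G : SimpleGraph V) (k : ℕ) (born : V → ℕ) (parent : V → V) (r : V)
    (hle : ∀ v, born v ≤ k) (hr : ∀ v, born v = 0 ↔ v = r)
    (hru : ∀ w, w ≠ r → G.Adj r w)
    (hpb : ∀ v, born v ≠ 0 → born (parent v) < born v)
    (hinj : ∀ v w, born v ≠ 0 → born v = born w → parent v = parent w → v = w)
    (hpu : ∀ v w, w ≠ parent v → G.Adj (parent v) w)
    (hproper : ∀ v w, G.Adj v w → born v ≠ born w) :
    ∃ S : GrowthSchedule G 2 k, S.excess = 0 := by
  have key : ∀ t v w, born v = t + 1 → born w ≤ t →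
      (w = parent v ∨ ((bornGraph G born t).Reachable (parent v) w ∧
        (bornGraph G born t).dist (parent v) w ≤ 2 - 1)) := by
    intro t v w hv hw
    by_cases h : w = parent v
    · exact Or.inl h
    · right
      have hp := hpb v (by omega)
      have ha : (bornGraph G born t).Adj (parent v) w := ⟨hpu v w h, by omega, hw⟩
      exact ⟨ha.reachable, (SimpleGraph.dist_eq_one_iff_adj.2 ha).le⟩
  have hroot : ∀ t v, born v ≤ t → (bornGraph G born t).Reachable r v := by
    intro t v hv
    by_cases h : v = r
    · rw [h]
    · have h0 := (hr r).2 rfl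
      exact SimpleGraph.Adj.reachable ⟨hru v h, by omega, hv⟩
  let S : GrowthSchedule G 2 k :=
    { born := born
      parent := parent
      graph := bornGraph G born
      mid := bornGraph G born
      born_le := hle
      init_unique := ⟨r, (hr r).2 rfl, fun v hv => (hr v).1 hv⟩
      parent_born := hpb
      parent_inj := hinj
      graph_zero := by
        ext v w
        simp only [SimpleGraph.bot_adj, iff_false]
        rintro ⟨h, h1, h2⟩
        exact hproper v w h (by omega)
      graph_final := by
        ext v w
        exact ⟨fun h => h.1, fun h => ⟨h, hle v, hle w⟩⟩
      keep_le_mid := fun t => bornGraph_mono G born (Nat.le_succ t)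
      parent_edge := fun v hv => by
        have hp := hpb v hv
        exact ⟨(hpu v v (fun h => by rw [← h] at hp; exact lt_irrefl _ hp)).symm, le_rfl, hp.le⟩
      new_edges := by
        rintro t v w ⟨h, hv, hw⟩ hn
        have hne := hproper v w h
        have hn' : ¬ (born v ≤ t ∧ born w ≤ t) := fun h' => hn ⟨h, h'⟩
        rcases (show (born v = t + 1 ∧ born w ≤ t) ∨ (born w = t + 1 ∧ born v ≤ t) by omega)
          with ⟨h1, h2⟩ | ⟨h1, h2⟩
        · exact Or.inl ⟨h1, h2, key t v w h1 h2⟩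
        · exact Or.inr ⟨h1, h2, key t w v h1 h2⟩
      graph_le_mid := fun t => le_rfl
      connected := fun t v w hv hw => (hroot t v hv).symm.trans (hroot t w hw) }
  exact ⟨S, by simp [GrowthSchedule.excess, S]⟩

/-- If `G` is a graph on `n` vertices and `G'` is the join of `G`
with the complete graph `K_n`, then the minimum number of slots over all
zero-excess growth schedules (with `d = 2`) for `G'` equals `χ(G) + n - 1`. -/
theorem join_clique_min_slots {V : Type*} [Fintype V] [DecidableEq V]
    (n : ℕ) (hn : 1 ≤ n) (hV : Fintype.card V = n) (G : SimpleGraph V)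
    (c : ℕ) (hc : G.chromaticNumber = c) :
    (∃ S : GrowthSchedule (joinClique G n) 2 (c + n - 1), S.excess = 0) ∧
    ∀ k : ℕ, (∃ S : GrowthSchedule (joinClique G n) 2 k, S.excess = 0) →
      c + n - 1 ≤ k := by
  constructor
  · obtain ⟨f⟩ : G.Colorable c := SimpleGraph.chromaticNumber_le_iff_colorable.1 hc.le
    let e : V ≃ Fin n := Fintype.equivFinOfCardEq hV
    let i0 : Fin n := ⟨0, hn⟩
    let born : V ⊕ Fin n → ℕ := Sum.elim (fun v => n + (f v : ℕ)) (fun i => (i : ℕ))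
    let par : V ⊕ Fin n → Fin n := Sum.elim (fun v => e v) (fun _ => i0)
    refine exists_schedule_of_universal_parents (joinClique G n) (c + n - 1) born
      (fun x => Sum.inr (par x)) (Sum.inr i0) ?_ ?_
      (fun w hw => (joinClique_adj_inr G n _ w).2 hw) ?_ ?_
      (fun v w hw => (joinClique_adj_inr G n _ w).2 hw) ?_
    · rintro (v | i)
      · have := (f v).isLt
        simp only [born, Sum.elim_inl]
        omega
      · have := i.isLt
        simp only [born, Sum.elim_inr]
        omega
    · rintro (v | i)
      · simp only [born, Sum.elim_inl, reduceCtorEq, iff_false]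
        omega
      · simp [born, i0, Fin.ext_iff]
    · rintro (v | i) h
      · have := (e v).isLt
        simp only [born, par, Sum.elim_inl, Sum.elim_inr]
        omega
      · simp only [born, par, i0, Sum.elim_inr] at h ⊢
        omega
    · rintro (v | i) (w | j) - hb hp
      · simpa [par] using hp
      · have := j.isLt
        simp only [born, Sum.elim_inl, Sum.elim_inr] at hb
        omega
      · have := i.isLt
        simp only [born, Sum.elim_inl, Sum.elim_inr] at hb
        omega
      · simpa [born, Fin.ext_iff] using hb
    · rintro (v | i) (w | j) ha hb
      · refine f.valid ((joinClique_adj_inl G n v w).1 ha) (Fin.ext ?_)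
        simpa [born] using hb
      · have := j.isLt
        simp only [born, Sum.elim_inl, Sum.elim_inr] at hb
        omega
      · have := i.isLt
        simp only [born, Sum.elim_inl, Sum.elim_inr] at hb
        omega
      · refine ha.ne ?_
        simpa [born, Fin.ext_iff] using hb
  · rintro k ⟨S, -⟩
    let f : (joinClique G n).Coloring (Fin (k + 1)) :=
      SimpleGraph.Coloring.mk (fun v => ⟨S.born v, Nat.lt_succ_of_le (S.born_le v)⟩) (by
        intro v w h heq
        have h' : (S.graph k).Adj v w := by rw [S.graph_final]; exact h
        exact S.born_ne_of_adj k h' (congrArg Fin.val heq))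
    obtain ⟨h1, h2⟩ := colorable_of_joinClique G n (k + 1) f
    have h3 := SimpleGraph.chromaticNumber_le_iff_colorable.2 h2
    rw [hc] at h3
    have h4 : c ≤ k + 1 - n := by exact_mod_cast h3
    omega
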